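/- (Energy-norm error for nonlocal problems with non-symmetric polygonal interaction neighborhoods.) Let Ω ⊂ ℝ² be bounded and open, let δ₀ ∈ (0,1], μ ∈ {0,1}, and A, B, M, R, K, K' > 0, and suppose x* ∈ ℝ² is such that Ω̂_{δ₀} is contained in the closed ball B̄_R(x*). Then there is a constant C > 0, depending only on Ω, δ₀, A, B, M, R, K, K', with the following property. Let δ ∈ (0,δ₀] and r ∈ [δ/2, δ], let γ̃ satisfy the radial kernel conditions with horizon δ in dimension 2 with ∫_{B_δ(0)} γ̃(|z|) dz ≤ K δ^{-2}, suppose the Lebesgue measure of Ω_δ^c satisfies |Ω_δ^c| ≤ K' δ, and set D := ∫_{r ≤ |z| ≤ δ} |z|² γ̃(|z|) dz; assume D ≤ 1/2 and 4R·D/r ≤ 1. Let k : Ω̂_δ × Ω̂_δ → [0,∞) be measurable and symmetric (k(x,y) = k(y,x)) such that for every x ∈ Ω there is a measurable weight m_x : ℝ² → [0,1] with m_x(z) = 1 for |z| ≤ r, m_x(z) = 0 for |z| ≥ δ, and k(x, x+z) = γ̃(|z|) m_x(z) for almost every z, and such that k(x,y) ≤ γ̃(|y−x|) for all x, y ∈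 Ω̂_δ. Let u₀ : ℝ² → ℝ be four times continuously differentiable on an open neighborhood of the closure of Ω̂_δ with ‖D^j u₀(y)‖ ≤ M for all y ∈ Ω̂_δ and j = 0,…,4, and set f₀ = −Δu₀ on Ω. Let f_δ : Ω → ℝ satisfy sup_Ω |f_δ − f₀| ≤ A δ², let g_δ : Ω_δ^c → ℝ satisfy sup_{Ω_δ^c} |g_δ − u₀| ≤ B δ^{2+μ}, and let u : Ω̂_δ → ℝ be bounded and measurable with −2∫_{Ω̂_δ} (u(y) − u(x)) k(x,y) dy = f_δ(x) for every x ∈ Ω and u = g_δ on Ω_δ^c. Then ∫_{Ω̂_δ}∫_{Ω̂_δ} ((u−u₀)(y) − (u−u₀)(x))² k(x,y) dy dx ≤ C (δ^{1+μ} + δ^{-1} D)(δ² + δ^{-1} D). -/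

import Mathlib

open MeasureTheory Metric Set

noncomputable section

/-- Surface measure of the unit sphere in `ℝ^d`, expressed as `d` times the volume
of the unit ball. -/
def unitSphereArea (d : ℕ) : ℝ :=
  d * (volume (ball (0 : EuclideanSpace ℝ (Fin d)) 1)).toReal

/-- The radial kernel conditions with horizon `δ` in dimension `d`. -/
def RadialKernel (d : ℕ) (δ : ℝ) (γ : ℝ → ℝ) : Prop :=
  Measurable γ ∧ (∀ s, 0 < s → s < δ → 0 < γ s) ∧ (∀ s, δ ≤ s → γ s = 0) ∧
    IntegrableOn γ (Ioo 0 δ) ∧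
    unitSphereArea d * (∫ s in Ioo 0 δ, s ^ (d + 1) * γ s) = d

/-- The part of the complement of `Ω` within distance `δ` of the boundary. -/
def omegaC {d : ℕ} (Ω : Set (EuclideanSpace ℝ (Fin d))) (δ : ℝ) :
    Set (EuclideanSpace ℝ (Fin d)) :=
  {y | y ∉ Ω ∧ infDist y (frontier Ω) < δ}

/-- `Ω̂_δ = Ω ∪ Ω_δ^c`. -/
def hatΩ {d : ℕ} (Ω : Set (EuclideanSpace ℝ (Fin d))) (δ : ℝ) :
    Set (EuclideanSpace ℝ (Fin d)) :=
  Ω ∪ omegaC Ω δ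

/-- The Laplacian of `u : ℝ^d → ℝ`, as the trace of the second derivative. -/
def lap (d : ℕ) (u : EuclideanSpace ℝ (Fin d) → ℝ) (x : EuclideanSpace ℝ (Fin d)) : ℝ :=
  ∑ i : Fin d, iteratedFDeriv ℝ 2 u x ![EuclideanSpace.single i 1, EuclideanSpace.single i 1]

/-!
Write `e = u - u₀` and `L v x = 2 ∫ (v y - v x) k(x, y) dy`. By radial symmetry only the quadratic
part of the Taylor expansion of `u₀` survives integration against the full kernel `γ`, so `L u₀`
differs from `Δu₀` by `O(δ²)`, plus the `O(D / δ)` caused by the truncation in `r ≤ ‖z‖ ≤ δ`, where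
no cancellation is left. Hence `|L e| ≤ T` on `Ω` with `T = O(δ² + δ⁻¹ D)`. The smallness of `D`
keeps `L ‖· - x*‖² ≥ d` on `Ω`, so the maximum principle gives `|e| ≤ O(δ^(2 + μ)) + 2 T R²`
everywhere. Since `k` is symmetric, the energy equals `-∫ e L e`: on `Ω` the integrand is
`O(T) · T`, while on the collar, of measure `O(δ)`, the boundary data give `e = O(δ^(2 + μ))` and
the bound `K δ⁻²` for the interaction rate gives `L e = O(δ⁻² sup |e|)`.
-/

section NonlocalOperator

variable {α : Type*} [MeasurableSpace α] {ν : Measure α} {k : α → α → ℝ} {S Ω : Set α}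
  {κ η b c T Q ε : ℝ} {u v e w ψ : α → ℝ} {x : α}

/-- The nonlocal diffusion operator `u ↦ 2 ∫ (u y - u x) k(x, y) dν(y)`. -/
def nonlocalOp (ν : Measure α) (k : α → α → ℝ) (u : α → ℝ) (x : α) : ℝ :=
  2 * ∫ y, (u y - u x) * k x y ∂ν

/-- The square of the energy seminorm attached to the kernel `k`. -/
def nonlocalEnergy (ν : Measure α) (k : α → α → ℝ) (e : α → ℝ) : ℝ :=
  ∫ x, ∫ y, (e y - e x) ^ 2 * k x y ∂ν ∂ν

/-- A nonnegative interaction kernel on `S` whose total interaction rate `∫_S k(x, y) dν(y)` is at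
most `κ` at every point `x` of `S`. -/
structure IsBoundedKernelOn (ν : Measure α) (S : Set α) (k : α → α → ℝ) (κ : ℝ) : Prop where
  measurable : Measurable (Function.uncurry k)
  nonneg : ∀ x ∈ S, ∀ y ∈ S, 0 ≤ k x y
  integrableOn : ∀ x ∈ S, IntegrableOn (k x) S ν
  setIntegral_le : ∀ x ∈ S, ∫ y in S, k x y ∂ν ≤ κ

theorem nonlocalOp_const_mul (a : ℝ) (u : α → ℝ) (x : α) :
    nonlocalOp ν k (fun y => a * u y) x = a * nonlocalOp ν k u x := by
  simp only [nonlocalOp, ← mul_sub, mul_assoc, integral_const_mul]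
  ring

theorem nonlocalOp_neg (u : α → ℝ) (x : α) :
    nonlocalOp ν k (-u) x = -nonlocalOp ν k u x := by
  simpa [Pi.neg_def] using nonlocalOp_const_mul (ν := ν) (k := k) (-1) u x

theorem integrable_increment_mul (hk : Integrable (k x) ν) (hu : MemLp u ⊤ ν) :
    Integrable (fun y => (u y - u x) * k x y) ν :=
  hk.mul_of_top_right (hu.sub (memLp_top_const (u x)))

theorem nonlocalOp_add (hk : Integrable (k x) ν) (hu : MemLp u ⊤ ν) (hv : MemLp v ⊤ ν) :
    nonlocalOp ν k (u + v) x = nonlocalOp ν k u x + nonlocalOp ν k v x := by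
  simp only [nonlocalOp, ← mul_add, Pi.add_apply]
  rw [← integral_add (integrable_increment_mul hk hu) (integrable_increment_mul hk hv)]
  congr! 3 with y
  ring

theorem nonlocalOp_sub (hk : Integrable (k x) ν) (hu : MemLp u ⊤ ν) (hv : MemLp v ⊤ ν) :
    nonlocalOp ν k (u - v) x = nonlocalOp ν k u x - nonlocalOp ν k v x := by
  rw [sub_eq_add_neg, nonlocalOp_add hk hu hv.neg, nonlocalOp_neg, sub_eq_add_neg]

theorem memLp_top_restrict_of_abs_le (hS : MeasurableSet S)
    (hu : AEStronglyMeasurable u (ν.restrict S)) (hc : ∀ x ∈ S, |u x| ≤ c) :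
    MemLp u ⊤ (ν.restrict S) :=
  memLp_top_of_bound hu c (ae_restrict_of_forall_mem hS hc)

-- Symmetry of `k` gives `∫∫ e(y) (e(y) - e(x)) k = -∫∫ e(x) (e(y) - e(x)) k`.
theorem nonlocalEnergy_eq_neg_integral_mul_nonlocalOp [IsFiniteMeasure ν]
    (hk : Integrable (Function.uncurry k) (ν.prod ν))
    (hsymm : ∀ᵐ p ∂ν.prod ν, k p.2 p.1 = k p.1 p.2) (he : MemLp e ⊤ ν) :
    nonlocalEnergy ν k e = -∫ x, e x * nonlocalOp ν k e x ∂ν := by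
  have hF : Integrable (fun p : α × α => (e p.2 - e p.1) * k p.1 p.2) (ν.prod ν) :=
    hk.mul_of_top_right ((he.comp_snd ν).sub (he.comp_fst ν))
  have hF₁ : Integrable (fun p : α × α => e p.1 * ((e p.2 - e p.1) * k p.1 p.2)) (ν.prod ν) :=
    hF.mul_of_top_right (he.comp_fst ν)
  have hF₂ : Integrable (fun p : α × α => e p.2 * ((e p.2 - e p.1) * k p.1 p.2)) (ν.prod ν) :=
    hF.mul_of_top_right (he.comp_snd ν)
  have hsq : ∀ p : α × α, (e p.2 - e p.1) ^ 2 * k p.1 p.2 =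
      e p.2 * ((e p.2 - e p.1) * k p.1 p.2) - e p.1 * ((e p.2 - e p.1) * k p.1 p.2) :=
    fun p => by ring
  have hswap : ∫ p, e p.2 * ((e p.2 - e p.1) * k p.1 p.2) ∂ν.prod ν =
      -∫ p, e p.1 * ((e p.2 - e p.1) * k p.1 p.2) ∂ν.prod ν := by
    rw [← integral_prod_swap, ← integral_neg]
    refine integral_congr_ae (hsymm.mono fun p hp => ?_)
    simp only [Prod.fst_swap, Prod.snd_swap, hp]
    ring
  calc nonlocalEnergy ν k e
      = ∫ p, (e p.2 - e p.1) ^ 2 * k p.1 p.2 ∂ν.prod ν := by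
        refine (integral_prod (fun p : α × α => (e p.2 - e p.1) ^ 2 * k p.1 p.2) ?_).symm
        exact (hF₂.sub hF₁).congr (ae_of_all _ fun p => (hsq p).symm)
    _ = -(2 * ∫ p, e p.1 * ((e p.2 - e p.1) * k p.1 p.2) ∂ν.prod ν) := by
        simp only [hsq]
        rw [integral_sub hF₂ hF₁, hswap]
        ring
    _ = -∫ x, e x * nonlocalOp ν k e x ∂ν := by
        rw [integral_prod _ hF₁, ← integral_const_mul]
        simp only [nonlocalOp, integral_const_mul, mul_left_comm]

namespace IsBoundedKernelOn

theorem bound_nonneg (hk : IsBoundedKernelOn ν S k κ) (hS : MeasurableSet S) (hx : x ∈ S) :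
    0 ≤ κ :=
  (setIntegral_nonneg hS (hk.nonneg x hx)).trans (hk.setIntegral_le x hx)

theorem integrable_uncurry (hk : IsBoundedKernelOn ν S k κ) (hS : MeasurableSet S)
    (hνS : ν S ≠ ⊤) :
    Integrable (Function.uncurry k) ((ν.restrict S).prod (ν.restrict S)) := by
  have : Fact (ν S < ⊤) := ⟨hνS.lt_top⟩
  rw [integrable_prod_iff hk.measurable.aestronglyMeasurable]
  refine ⟨ae_restrict_of_forall_mem hS hk.integrableOn, Integrable.of_bound (C := κ)
    hk.measurable.norm.stronglyMeasurable.integral_prod_right'.aestronglyMeasurable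
    (ae_restrict_of_forall_mem hS fun x hx => ?_)⟩
  rw [Real.norm_of_nonneg (integral_nonneg fun y => norm_nonneg _)]
  refine (setIntegral_congr_fun hS fun y hy => ?_).trans_le (hk.setIntegral_le x hx)
  exact Real.norm_of_nonneg (hk.nonneg x hx y hy)

theorem nonlocalOp_le (hk : IsBoundedKernelOn ν S k κ) (hS : MeasurableSet S) (hε : 0 ≤ ε)
    (hx : x ∈ S) (hw : ∀ y ∈ S, w y - w x ≤ ε) :
    nonlocalOp (ν.restrict S) k w x ≤ 2 * (ε * κ) := by
  refine mul_le_mul_of_nonneg_left ?_ zero_le_two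
  by_cases hi : IntegrableOn (fun y => (w y - w x) * k x y) S ν
  · calc ∫ y in S, (w y - w x) * k x y ∂ν
        ≤ ∫ y in S, ε * k x y ∂ν :=
          setIntegral_mono_on hi ((hk.integrableOn x hx).const_mul ε) hS fun y hy =>
            mul_le_mul_of_nonneg_right (hw y hy) (hk.nonneg x hx y hy)
      _ = ε * ∫ y in S, k x y ∂ν := integral_const_mul _ _
      _ ≤ ε * κ := mul_le_mul_of_nonneg_left (hk.setIntegral_le x hx) hε
  · rw [integral_undef hi]
    exact mul_nonneg hε (hk.bound_nonneg hS hx)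

theorem abs_nonlocalOp_le (hk : IsBoundedKernelOn ν S k κ) (hS : MeasurableSet S)
    (hx : x ∈ S) (hw : ∀ y ∈ S, |w y - w x| ≤ ε) :
    |nonlocalOp (ν.restrict S) k w x| ≤ 2 * (ε * κ) := by
  have hε : 0 ≤ ε := (abs_nonneg _).trans (hw x hx)
  refine abs_le'.2 ⟨hk.nonlocalOp_le hS hε hx fun y hy => (le_abs_self _).trans (hw y hy), ?_⟩
  rw [← nonlocalOp_neg]
  refine hk.nonlocalOp_le hS hε hx fun y hy => ?_
  calc -w y - -w x = -(w y - w x) := by ring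
    _ ≤ |w y - w x| := neg_le_abs _
    _ ≤ ε := hw y hy

-- At a point of `Ω` where `w` is within `ε` of its supremum over `S` the operator is at most
-- `2εκ < η`; since a maximum need not be attained, such near-maximum points replace it.
theorem le_of_le_nonlocalOp (hk : IsBoundedKernelOn ν S k κ) (hS : MeasurableSet S) (hη : 0 < η)
    (hw : BddAbove (w '' S)) (hL : ∀ x ∈ Ω, η ≤ nonlocalOp (ν.restrict S) k w x)
    (hc : ∀ x ∈ S \ Ω, w x ≤ c) : ∀ x ∈ S, w x ≤ c := by
  intro x₀ hx₀
  by_contra! hlt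
  have hκ : 0 ≤ κ := hk.bound_nonneg hS hx₀
  set ε := η / (2 * (κ + 1)) with hε
  have hε₀ : 0 < ε := by positivity
  obtain ⟨_, ⟨x, hx, rfl⟩, hxw⟩ := exists_lt_of_lt_csSup ⟨_, mem_image_of_mem w hx₀⟩
    (max_lt (hlt.trans_le (le_csSup hw (mem_image_of_mem w hx₀))) (sub_lt_self _ hε₀))
  obtain ⟨hcx, hsx⟩ := max_lt_iff.1 hxw
  have hxΩ : x ∈ Ω := by
    by_contra hxΩ
    exact hcx.not_ge (hc x ⟨hx, hxΩ⟩)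
  have hle : nonlocalOp (ν.restrict S) k w x ≤ 2 * (ε * κ) :=
    hk.nonlocalOp_le hS hε₀.le hx fun y hy => by
      linarith [le_csSup hw (mem_image_of_mem w hy)]
  have hη' : 2 * (ε * κ) = η - 2 * ε := by
    rw [hε]
    field_simp
    ring
  linarith [hL x hxΩ]

theorem le_add_of_barrier (hk : IsBoundedKernelOn ν S k κ) (hS : MeasurableSet S) (hη : 0 < η)
    (he : AEStronglyMeasurable e (ν.restrict S)) (hec : ∀ x ∈ S, |e x| ≤ c)
    (hψ : AEStronglyMeasurable ψ (ν.restrict S)) (hψQ : ∀ x ∈ S, ψ x ∈ Icc 0 Q) (hΩS : Ω ⊆ S)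
    (hL : ∀ x ∈ Ω, η - nonlocalOp (ν.restrict S) k e x ≤ nonlocalOp (ν.restrict S) k ψ x)
    (heb : ∀ x ∈ S \ Ω, e x ≤ b) : ∀ x ∈ S, e x ≤ b + Q := by
  have he' := memLp_top_restrict_of_abs_le hS he hec
  have hψ' : MemLp ψ ⊤ (ν.restrict S) := memLp_top_restrict_of_abs_le hS hψ fun x hx =>
    (abs_of_nonneg (hψQ x hx).1).trans_le (hψQ x hx).2
  have hsum : ∀ x ∈ S, (e + ψ) x ≤ b + Q := by
    refine hk.le_of_le_nonlocalOp hS hη ⟨c + Q, ?_⟩ (fun x hx => ?_)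
      fun x hx => add_le_add (heb x hx) (hψQ x hx.1).2
    · rintro _ ⟨x, hx, rfl⟩
      exact add_le_add ((le_abs_self _).trans (hec x hx)) (hψQ x hx).2
    · rw [nonlocalOp_add (hk.integrableOn x (hΩS hx)) he' hψ']
      linarith [hL x hx]
  exact fun x hx => (le_add_of_nonneg_right (hψQ x hx).1).trans (hsum x hx)

theorem abs_le_add_of_barrier (hk : IsBoundedKernelOn ν S k κ) (hS : MeasurableSet S) (hη : 0 < η)
    (he : AEStronglyMeasurable e (ν.restrict S)) (hec : ∀ x ∈ S, |e x| ≤ c)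
    (hψ : AEStronglyMeasurable ψ (ν.restrict S)) (hψQ : ∀ x ∈ S, ψ x ∈ Icc 0 Q) (hΩS : Ω ⊆ S)
    (hL : ∀ x ∈ Ω, η + |nonlocalOp (ν.restrict S) k e x| ≤ nonlocalOp (ν.restrict S) k ψ x)
    (heb : ∀ x ∈ S \ Ω, |e x| ≤ b) : ∀ x ∈ S, |e x| ≤ b + Q := by
  have hpos := hk.le_add_of_barrier hS hη he hec hψ hψQ hΩS
    (fun x hx => by linarith [hL x hx, neg_le_abs (nonlocalOp (ν.restrict S) k e x)])
    fun x hx => (le_abs_self _).trans (heb x hx)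
  have hneg := hk.le_add_of_barrier (e := -e) hS hη he.neg
    (fun x hx => (abs_neg _).trans_le (hec x hx)) hψ hψQ hΩS
    (fun x hx => by
      rw [nonlocalOp_neg]
      linarith [hL x hx, le_abs_self (nonlocalOp (ν.restrict S) k e x)])
    fun x hx => (neg_le_abs _).trans (heb x hx)
  exact fun x hx => abs_le'.2 ⟨hpos x hx, hneg x hx⟩

theorem nonlocalEnergy_eq [SFinite ν] (hk : IsBoundedKernelOn ν S k κ) (hS : MeasurableSet S)
    (hνS : ν S ≠ ⊤) (hsymm : ∀ x ∈ S, ∀ y ∈ S, k x y = k y x)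
    (he : AEStronglyMeasurable e (ν.restrict S)) (hec : ∀ x ∈ S, |e x| ≤ c) :
    nonlocalEnergy (ν.restrict S) k e =
      -∫ x in S, e x * nonlocalOp (ν.restrict S) k e x ∂ν := by
  have : Fact (ν S < ⊤) := ⟨hνS.lt_top⟩
  refine nonlocalEnergy_eq_neg_integral_mul_nonlocalOp (hk.integrable_uncurry hS hνS) ?_
    (memLp_top_restrict_of_abs_le hS he hec)
  rw [Measure.prod_restrict]
  exact ae_restrict_of_forall_mem (hS.prod hS) fun p hp => hsymm p.2 hp.2 p.1 hp.1

theorem abs_mul_nonlocalOp_le (hk : IsBoundedKernelOn ν S k κ) (hS : MeasurableSet S)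
    (hec : ∀ x ∈ S, |e x| ≤ c) (hx : x ∈ S) (hxb : |e x| ≤ b) :
    |e x * nonlocalOp (ν.restrict S) k e x| ≤ b * (4 * c * κ) := by
  have hL := hk.abs_nonlocalOp_le hS hx (w := e) (ε := 2 * c) fun y hy => by
    linarith [abs_sub (e y) (e x), hec x hx, hec y hy]
  rw [abs_mul]
  exact mul_le_mul hxb (hL.trans_eq (by ring)) (abs_nonneg _) ((abs_nonneg _).trans hxb)

theorem nonlocalEnergy_le [SFinite ν] (hk : IsBoundedKernelOn ν S k κ) (hS : MeasurableSet S)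
    (hνS : ν S ≠ ⊤) (hsymm : ∀ x ∈ S, ∀ y ∈ S, k x y = k y x)
    (he : AEStronglyMeasurable e (ν.restrict S)) (hec : ∀ x ∈ S, |e x| ≤ c)
    (hΩ : MeasurableSet Ω) (hΩS : Ω ⊆ S)
    (hL : ∀ x ∈ Ω, |nonlocalOp (ν.restrict S) k e x| ≤ T) (heb : ∀ x ∈ S \ Ω, |e x| ≤ b) :
    nonlocalEnergy (ν.restrict S) k e ≤
      ν.real Ω * (c * T) + ν.real (S \ Ω) * (b * (4 * c * κ)) := by
  have : Fact (ν S < ⊤) := ⟨hνS.lt_top⟩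
  have hΩ_int : IntegrableOn (Ω.indicator fun _ => c * T) S ν :=
    (integrable_const _).indicator hΩ
  have hcollar_int : IntegrableOn ((S \ Ω).indicator fun _ => b * (4 * c * κ)) S ν :=
    (integrable_const _).indicator (hS.diff hΩ)
  have hpointwise : ∀ x ∈ S, ‖e x * nonlocalOp (ν.restrict S) k e x‖ ≤
      Ω.indicator (fun _ => c * T) x + (S \ Ω).indicator (fun _ => b * (4 * c * κ)) x := by
    intro x hx
    by_cases hxΩ : x ∈ Ω
    · rw [indicator_of_mem hxΩ, indicator_of_notMem fun h => h.2 hxΩ, add_zero, norm_mul]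
      exact mul_le_mul (hec x hx) (hL x hxΩ) (abs_nonneg _) ((abs_nonneg _).trans (hec x hx))
    · have hxΩ' : x ∈ S \ Ω := ⟨hx, hxΩ⟩
      rw [indicator_of_notMem hxΩ, indicator_of_mem hxΩ', zero_add]
      exact hk.abs_mul_nonlocalOp_le hS hec hx (heb x hxΩ')
  calc nonlocalEnergy (ν.restrict S) k e
      = -∫ x in S, e x * nonlocalOp (ν.restrict S) k e x ∂ν :=
        hk.nonlocalEnergy_eq hS hνS hsymm he hec
    _ ≤ ‖∫ x in S, e x * nonlocalOp (ν.restrict S) k e x ∂ν‖ := neg_le_abs _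
    _ ≤ ∫ x in S, Ω.indicator (fun _ => c * T) x +
          (S \ Ω).indicator (fun _ => b * (4 * c * κ)) x ∂ν :=
        norm_integral_le_of_norm_le (hΩ_int.add hcollar_int)
          (ae_restrict_of_forall_mem hS hpointwise)
    _ = ν.real Ω * (c * T) + ν.real (S \ Ω) * (b * (4 * c * κ)) := by
        rw [integral_add hΩ_int hcollar_int, setIntegral_indicator hΩ,
          setIntegral_indicator (hS.diff hΩ), inter_eq_self_of_subset_right hΩS,
          inter_eq_self_of_subset_right sdiff_subset, setIntegral_const, setIntegral_const,
          smul_eq_mul, smul_eq_mul]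

end IsBoundedKernelOn

end NonlocalOperator

section Taylor

variable {E F : Type*} [NormedAddCommGroup E] [NormedSpace ℝ E] [NormedAddCommGroup F]
  [NormedSpace ℝ F] {f : E → F} {S T : Set E} {x y : E} {m n : ℕ} {M : ℝ}

/-- A function that is `n` times continuously differentiable near every point of `S`, with
derivatives up to order `n` bounded by `M` on `S`. -/
structure HasBoundedDerivsOn (n : ℕ) (M : ℝ) (f : E → F) (S : Set E) : Prop where
  contDiffAt : ∀ x ∈ S, ContDiffAt ℝ n f x
  norm_le : ∀ x ∈ S, ∀ j ≤ n, ‖iteratedFDeriv ℝ j f x‖ ≤ M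

theorem norm_add_sub_taylor_le [CompleteSpace F]
    (hf : ∀ t ∈ Icc (0 : ℝ) 1, ContDiffAt ℝ (n + 1) f (x + t • y))
    (hM : ∀ t ∈ Icc (0 : ℝ) 1, ‖iteratedFDeriv ℝ (n + 1) f (x + t • y)‖ ≤ M) :
    ‖f (x + y) - ∑ j ∈ Finset.range (n + 1),
        (j.factorial : ℝ)⁻¹ • iteratedFDeriv ℝ j f x fun _ => y‖ ≤
      M * ‖y‖ ^ (n + 1) / n.factorial := by
  rw [map_add_eq_sum_add_integral_iteratedFDeriv hf, add_sub_cancel_left, norm_smul, norm_inv,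
    Real.norm_natCast, div_eq_inv_mul]
  refine mul_le_mul_of_nonneg_left ?_ (by positivity)
  have hbound : ∀ t ∈ uIoc (0 : ℝ) 1,
      ‖(1 - t) ^ n • iteratedFDeriv ℝ (n + 1) f (x + t • y) fun _ => y‖ ≤ M * ‖y‖ ^ (n + 1) := by
    intro t ht
    rw [uIoc_of_le zero_le_one] at ht
    have ht' : |1 - t| ≤ 1 := abs_le.2 ⟨by linarith [ht.2], by linarith [ht.1]⟩
    rw [norm_smul, norm_pow, Real.norm_eq_abs]
    refine (mul_le_of_le_one_left (norm_nonneg _) (pow_le_one₀ (abs_nonneg _) ht')).trans ?_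
    refine ((iteratedFDeriv ℝ (n + 1) f (x + t • y)).le_opNorm _).trans ?_
    rw [Finset.prod_const, Finset.card_univ, Fintype.card_fin]
    exact mul_le_mul_of_nonneg_right (hM t (Ioc_subset_Icc_self ht)) (by positivity)
  simpa using intervalIntegral.norm_integral_le_of_norm_le_const hbound

namespace HasBoundedDerivsOn

theorem mono (hf : HasBoundedDerivsOn n M f T) (hST : S ⊆ T) : HasBoundedDerivsOn n M f S :=
  ⟨fun x hx => hf.contDiffAt x (hST hx), fun x hx => hf.norm_le x (hST hx)⟩

theorem of_le (hf : HasBoundedDerivsOn n M f S) (hmn : m ≤ n) : HasBoundedDerivsOn m M f S :=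
  ⟨fun x hx => (hf.contDiffAt x hx).of_le (by exact_mod_cast hmn),
    fun x hx j hj => hf.norm_le x hx j (hj.trans hmn)⟩

theorem continuousOn (hf : HasBoundedDerivsOn n M f S) : ContinuousOn f S :=
  fun x hx => (hf.contDiffAt x hx).continuousAt.continuousWithinAt

theorem norm_apply_le (hf : HasBoundedDerivsOn n M f S) (hx : x ∈ S) : ‖f x‖ ≤ M := by
  simpa only [norm_iteratedFDeriv_zero] using hf.norm_le x hx 0 n.zero_le

theorem norm_add_sub_taylor_le [CompleteSpace F] (hf : HasBoundedDerivsOn n M f S)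
    (hS : Convex ℝ S) (hx : x ∈ S) (hxy : x + y ∈ S) (hmn : m + 1 ≤ n) :
    ‖f (x + y) - ∑ j ∈ Finset.range (m + 1),
        (j.factorial : ℝ)⁻¹ • iteratedFDeriv ℝ j f x fun _ => y‖ ≤
      M * ‖y‖ ^ (m + 1) / m.factorial := by
  have hmem : ∀ t ∈ Icc (0 : ℝ) 1, x + t • y ∈ S := fun t ht => hS.add_smul_mem hx hxy ht
  exact _root_.norm_add_sub_taylor_le
    (fun t ht => (hf.contDiffAt _ (hmem t ht)).of_le (by exact_mod_cast hmn))
    fun t ht => hf.norm_le _ (hmem t ht) _ hmn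

theorem norm_add_sub_le [CompleteSpace F] (hf : HasBoundedDerivsOn n M f S) (hS : Convex ℝ S)
    (hx : x ∈ S) (hxy : x + y ∈ S) (hn : 1 ≤ n) : ‖f (x + y) - f x‖ ≤ M * ‖y‖ := by
  simpa using hf.norm_add_sub_taylor_le (m := 0) hS hx hxy hn

end HasBoundedDerivsOn

end Taylor

section Collar

variable {d : ℕ} {Ω : Set (EuclideanSpace ℝ (Fin d))} {x y : EuclideanSpace ℝ (Fin d)} {δ δ' : ℝ}

theorem hatΩ_diff_self : hatΩ Ω δ \ Ω = omegaC Ω δ :=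
  union_sdiff_cancel_left fun _ hx => hx.2.1 hx.1

theorem hatΩ_mono (h : δ ≤ δ') : hatΩ Ω δ ⊆ hatΩ Ω δ' :=
  union_subset_union_right _ fun _ hx => ⟨hx.1, hx.2.trans_le h⟩

theorem measurableSet_hatΩ (hΩ : MeasurableSet Ω) : MeasurableSet (hatΩ Ω δ) :=
  hΩ.union <| hΩ.compl.inter (measurable_infDist measurableSet_Iio)

theorem ball_subset_hatΩ (hx : x ∈ Ω) : ball x δ ⊆ hatΩ Ω δ := by
  intro y hy
  by_cases hyΩ : y ∈ Ω
  · exact Or.inl hyΩ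
  obtain ⟨z, hz, hyz⟩ := exists_mem_frontier_infDist_compl_eq_dist (mem_compl hyΩ)
    (compl_ne_univ.2 ⟨x, hx⟩)
  rw [frontier_compl] at hz
  rw [compl_compl] at hyz
  refine Or.inr ⟨hyΩ, ?_⟩
  calc infDist y (frontier Ω) ≤ dist y z := infDist_le_dist_of_mem hz
    _ = infDist y Ω := hyz.symm
    _ ≤ dist y x := infDist_le_dist_of_mem hx
    _ < δ := hy

end Collar

section RadialIntegral

variable {E : Type*} [NormedAddCommGroup E] [InnerProductSpace ℝ E] [FiniteDimensional ℝ E]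
  [MeasurableSpace E] [BorelSpace E] {d n : ℕ} {i j : Fin d}

theorem integral_comp_linearIsometryEquiv_mul_norm (A : E ≃ₗᵢ[ℝ] E) (φ : E → ℝ) (γ : ℝ → ℝ) :
    ∫ z, φ (A z) * γ ‖z‖ = ∫ z, φ z * γ ‖z‖ := by
  simpa only [LinearIsometryEquiv.coe_toMeasurableEquiv, A.norm_map] using
    (A.measurePreserving.integral_comp' (f := A.toMeasurableEquiv) fun z => φ z * γ ‖z‖)

theorem integral_mul_norm_eq_zero_of_comp_eq_neg (A : E ≃ₗᵢ[ℝ] E) {φ : E → ℝ}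
    (hφ : ∀ z, φ (A z) = -φ z) (γ : ℝ → ℝ) : ∫ z, φ z * γ ‖z‖ = 0 := by
  have h := integral_comp_linearIsometryEquiv_mul_norm A φ γ
  simp only [hφ, neg_mul, integral_neg] at h
  linarith

theorem integral_odd_mul_norm_eq_zero {φ : E → ℝ} (hφ : ∀ z, φ (-z) = -φ z) (γ : ℝ → ℝ) :
    ∫ z, φ z * γ ‖z‖ = 0 :=
  integral_mul_norm_eq_zero_of_comp_eq_neg (LinearIsometryEquiv.neg ℝ) hφ γ

theorem integral_multilinear_mul_norm_eq_zero (hn : Odd n) (b : E [×n]→L[ℝ] ℝ) (γ : ℝ → ℝ) :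
    ∫ z, b (fun _ => z) * γ ‖z‖ = 0 := by
  refine integral_odd_mul_norm_eq_zero (fun z => ?_) γ
  simpa [hn.neg_one_pow] using b.map_smul_univ (fun _ => -1) fun _ => z

theorem integral_coord_mul_coord_mul_norm_eq_zero (hij : i ≠ j) (γ : ℝ → ℝ) :
    ∫ z : EuclideanSpace ℝ (Fin d), z i * z j * γ ‖z‖ = 0 := by
  let flip : EuclideanSpace ℝ (Fin d) ≃ₗᵢ[ℝ] EuclideanSpace ℝ (Fin d) :=
    LinearIsometryEquiv.piLpCongrRight 2 fun l =>
      if l = i then LinearIsometryEquiv.neg ℝ else LinearIsometryEquiv.refl ℝ ℝ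
  refine integral_mul_norm_eq_zero_of_comp_eq_neg flip (fun z => ?_) γ
  simp [flip, hij.symm]

theorem integral_coord_sq_mul_norm_eq (i j : Fin d) (γ : ℝ → ℝ) :
    ∫ z : EuclideanSpace ℝ (Fin d), z i ^ 2 * γ ‖z‖ =
      ∫ z : EuclideanSpace ℝ (Fin d), z j ^ 2 * γ ‖z‖ := by
  rw [← integral_comp_linearIsometryEquiv_mul_norm
    (LinearIsometryEquiv.piLpCongrLeft 2 ℝ ℝ (Equiv.swap i j)) fun z => z j ^ 2]
  simp [Equiv.piCongrLeft']

theorem bilinear_diag_eq_sum {F : Type*} [AddCommGroup F] [Module ℝ F] [TopologicalSpace F]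
    (b : EuclideanSpace ℝ (Fin d) [×2]→L[ℝ] F) (z : EuclideanSpace ℝ (Fin d)) :
    b (fun _ => z) = ∑ i, ∑ j,
      (z i * z j) • b ![EuclideanSpace.single i 1, EuclideanSpace.single j 1] := by
  have hz : z = ∑ i, z i • EuclideanSpace.single i (1 : ℝ) := by
    simpa using ((EuclideanSpace.basisFun (Fin d) ℝ).sum_repr z).symm
  calc b (fun _ => z)
      = ∑ p : Fin 2 → Fin d, b fun l => z (p l) • EuclideanSpace.single (p l) 1 := by
        conv_lhs => rw [hz]
        exact b.map_sum _
    _ = ∑ p : Fin d × Fin d,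
          (z p.1 * z p.2) • b ![EuclideanSpace.single p.1 1, EuclideanSpace.single p.2 1] := by
        refine Fintype.sum_equiv (finTwoArrowEquiv (Fin d)) _ _ fun p => ?_
        rw [b.map_smul_univ, Fin.prod_univ_two]
        congr 2
        ext l : 1
        fin_cases l <;> rfl
    _ = _ := Fintype.sum_prod_type _

end RadialIntegral

namespace RadialKernel

variable {d : ℕ} {δ c s : ℝ} {γ : ℝ → ℝ} {φ : EuclideanSpace ℝ (Fin d) → ℝ}

theorem eq_zero (hγ : RadialKernel d δ γ) (hs : δ ≤ s) : γ s = 0 := hγ.2.2.1 s hs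

theorem nonneg_of_pos (hγ : RadialKernel d δ γ) (hs : 0 < s) : 0 ≤ γ s :=
  (lt_or_ge s δ).elim (fun h => (hγ.2.1 s hs h).le) fun h => (hγ.eq_zero h).ge

theorem norm_sq_mul_nonneg (hγ : RadialKernel d δ γ) (z : EuclideanSpace ℝ (Fin d)) :
    0 ≤ ‖z‖ ^ 2 * γ ‖z‖ := by
  rcases (norm_nonneg z).eq_or_lt with hz | hz
  · simp [← hz]
  · exact mul_nonneg (sq_nonneg _) (hγ.nonneg_of_pos hz)

variable [NeZero d]

theorem ae_nonneg (hγ : RadialKernel d δ γ) :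
    ∀ᵐ z : EuclideanSpace ℝ (Fin d), 0 ≤ γ ‖z‖ :=
  (Measure.ae_ne volume 0).mono fun _ hz => hγ.nonneg_of_pos (norm_pos_iff.2 hz)

theorem integrable_norm (hγ : RadialKernel d δ γ) :
    Integrable fun z : EuclideanSpace ℝ (Fin d) => γ ‖z‖ := by
  rw [integrable_fun_norm_addHaar]
  have hbdd : IntegrableOn (fun s => s ^ (d - 1) * γ s) (Ioo 0 δ) :=
    Integrable.bdd_mul (c := δ ^ (d - 1)) hγ.2.2.2.1 (by fun_prop)
      (ae_restrict_of_forall_mem measurableSet_Ioo fun s hs => by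
        rw [norm_pow, Real.norm_of_nonneg hs.1.le]
        exact pow_le_pow_left₀ hs.1.le hs.2.le _)
  rw [finrank_euclideanSpace_fin]
  refine hbdd.of_forall_sdiff_eq_zero measurableSet_Ioi fun s hs => ?_
  rw [hγ.eq_zero (not_lt.1 fun h => hs.2 ⟨hs.1, h⟩), mul_zero]

theorem integrable_mul (hγ : RadialKernel d δ γ)
    (hφ : AEStronglyMeasurable φ (volume.restrict (ball 0 δ)))
    (hc : ∀ z, ‖z‖ < δ → |φ z| ≤ c) :
    Integrable fun z : EuclideanSpace ℝ (Fin d) => φ z * γ ‖z‖ := by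
  refine (integrableOn_iff_integrable_of_support_subset (s := ball 0 δ) fun z hz => ?_).1
    (hγ.integrable_norm.integrableOn.bdd_mul hφ
      (ae_restrict_of_forall_mem measurableSet_ball fun z hz => hc z (mem_ball_zero_iff.1 hz)))
  by_contra hzδ
  rw [mem_ball_zero_iff, not_lt] at hzδ
  exact hz (mul_eq_zero_of_right _ (hγ.eq_zero hzδ))

theorem integral_norm_sq_mul (hγ : RadialKernel d δ γ) :
    ∫ z : EuclideanSpace ℝ (Fin d), ‖z‖ ^ 2 * γ ‖z‖ = d := by
  have hpow : ∀ s : ℝ, s ^ (d - 1) * (s ^ 2 * γ s) = s ^ (d + 1) * γ s := fun s => by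
    rw [← mul_assoc, ← pow_add]
    congr 2
    have := NeZero.pos d
    omega
  rw [integral_fun_norm_addHaar volume fun s => s ^ 2 * γ s]
  simp only [finrank_euclideanSpace_fin, smul_eq_mul, nsmul_eq_mul, hpow]
  rw [setIntegral_eq_of_subset_of_forall_sdiff_eq_zero measurableSet_Ioi Ioo_subset_Ioi_self
    (fun s hs => ?_), ← mul_assoc]
  · exact hγ.2.2.2.2
  · rw [hγ.eq_zero (not_lt.1 fun h => hs.2 ⟨hs.1, h⟩), mul_zero]

theorem integrable_coord_mul_coord_mul (hγ : RadialKernel d δ γ) (i j : Fin d) :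
    Integrable fun z : EuclideanSpace ℝ (Fin d) => z i * z j * γ ‖z‖ := by
  refine hγ.integrable_mul (c := δ * δ) (by fun_prop) fun z hz => ?_
  rw [abs_mul]
  have hle : ∀ l, |z l| ≤ δ := fun l => (PiLp.norm_apply_le z l).trans hz.le
  exact mul_le_mul (hle i) (hle j) (abs_nonneg _) ((norm_nonneg z).trans hz.le)

theorem integral_coord_sq_mul (hγ : RadialKernel d δ γ) (i : Fin d) :
    ∫ z : EuclideanSpace ℝ (Fin d), z i ^ 2 * γ ‖z‖ = 1 := by
  have hd : (d : ℝ) ≠ 0 := NeZero.ne _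
  refine mul_left_cancel₀ hd ?_
  calc d * ∫ z : EuclideanSpace ℝ (Fin d), z i ^ 2 * γ ‖z‖
      = ∑ j, ∫ z : EuclideanSpace ℝ (Fin d), z j ^ 2 * γ ‖z‖ := by
        simp [integral_coord_sq_mul_norm_eq _ i]
    _ = ∫ z : EuclideanSpace ℝ (Fin d), ‖z‖ ^ 2 * γ ‖z‖ := by
        rw [← integral_finsetSum _ fun j _ => by
          simpa only [sq] using hγ.integrable_coord_mul_coord_mul j j]
        simp only [EuclideanSpace.real_norm_sq_eq, Finset.sum_mul]
    _ = d * 1 := by rw [hγ.integral_norm_sq_mul, mul_one]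

theorem integral_coord_mul_coord_mul (hγ : RadialKernel d δ γ) (i j : Fin d) :
    ∫ z : EuclideanSpace ℝ (Fin d), z i * z j * γ ‖z‖ = if i = j then 1 else 0 := by
  split_ifs with hij
  · simpa only [hij, sq] using hγ.integral_coord_sq_mul j
  · exact integral_coord_mul_coord_mul_norm_eq_zero hij γ

theorem integral_bilinear_mul (hγ : RadialKernel d δ γ)
    (b : EuclideanSpace ℝ (Fin d) [×2]→L[ℝ] ℝ) :
    ∫ z, b (fun _ => z) * γ ‖z‖ =
      ∑ i, b ![EuclideanSpace.single i 1, EuclideanSpace.single i 1] := by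
  have hterm : ∀ i j, Integrable fun z : EuclideanSpace ℝ (Fin d) => z i * z j * γ ‖z‖ *
      b ![EuclideanSpace.single i 1, EuclideanSpace.single j 1] :=
    fun i j => (hγ.integrable_coord_mul_coord_mul i j).mul_const _
  simp only [bilinear_diag_eq_sum b, Finset.sum_mul, smul_eq_mul, mul_right_comm _ (b _)]
  rw [integral_finsetSum _ fun i _ => integrable_finsetSum _ fun j _ => hterm i j]
  refine Finset.sum_congr rfl fun i _ => ?_
  rw [integral_finsetSum _ fun j _ => hterm i j]
  simp [integral_mul_const, hγ.integral_coord_mul_coord_mul]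

theorem integrable_multilinear_mul {n : ℕ} (hγ : RadialKernel d δ γ)
    (b : EuclideanSpace ℝ (Fin d) [×n]→L[ℝ] ℝ) :
    Integrable fun z => b (fun _ => z) * γ ‖z‖ := by
  refine hγ.integrable_mul (c := ‖b‖ * δ ^ n)
    (b.cont.comp (continuous_pi fun _ => continuous_id)).aestronglyMeasurable fun z hz => ?_
  refine (b.le_opNorm _).trans ?_
  rw [Finset.prod_const, Finset.card_univ, Fintype.card_fin]
  exact mul_le_mul_of_nonneg_left (pow_le_pow_left₀ (norm_nonneg z) hz.le n) (norm_nonneg b)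

theorem integrable_norm_sq_mul (hγ : RadialKernel d δ γ) :
    Integrable fun z : EuclideanSpace ℝ (Fin d) => ‖z‖ ^ 2 * γ ‖z‖ := by
  refine hγ.integrable_mul (c := δ ^ 2) (by fun_prop) fun z hz => ?_
  rw [abs_pow, abs_norm]
  exact pow_le_pow_left₀ (norm_nonneg z) hz.le 2

end RadialKernel

section Truncation

variable {d : ℕ} {Ω : Set (EuclideanSpace ℝ (Fin d))} {x p : EuclideanSpace ℝ (Fin d)}
  {δ r a b c A M R T κ : ℝ} {γ : ℝ → ℝ} {m φ f u e : EuclideanSpace ℝ (Fin d) → ℝ}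
  {k : EuclideanSpace ℝ (Fin d) → EuclideanSpace ℝ (Fin d) → ℝ}

/-- The second moment of the radial kernel `γ` over the annulus `r ≤ ‖z‖ ≤ δ`; it measures the
error made by cutting off the interaction inside this annulus (the quantity `D` of the theorem). -/
def annulusMoment (d : ℕ) (γ : ℝ → ℝ) (r δ : ℝ) : ℝ :=
  ∫ z in {z : EuclideanSpace ℝ (Fin d) | r ≤ ‖z‖ ∧ ‖z‖ ≤ δ}, ‖z‖ ^ 2 * γ ‖z‖

/-- A measurable weight with values in `[0, 1]` which equals `1` on the closed ball of radius `r`;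
it describes which part of an interaction neighbourhood is kept. -/
structure IsCutoffWeight (r : ℝ) (m : EuclideanSpace ℝ (Fin d) → ℝ) : Prop where
  measurable : Measurable m
  mem_Icc : ∀ z, m z ∈ Icc (0 : ℝ) 1
  eq_one : ∀ z, ‖z‖ ≤ r → m z = 1

/-- A symmetric nonnegative kernel on `Ω̂_δ`, dominated by the radial kernel `γ`, which around each
point of `Ω` is `γ` multiplied by some cutoff weight of inner radius `r`. -/
structure IsTruncatedKernel (Ω : Set (EuclideanSpace ℝ (Fin d))) (δ r : ℝ) (γ : ℝ → ℝ)
    (k : EuclideanSpace ℝ (Fin d) → EuclideanSpace ℝ (Fin d) → ℝ) : Prop where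
  measurable : Measurable (Function.uncurry k)
  nonneg : ∀ x ∈ hatΩ Ω δ, ∀ y ∈ hatΩ Ω δ, 0 ≤ k x y
  symm : ∀ x ∈ hatΩ Ω δ, ∀ y ∈ hatΩ Ω δ, k x y = k y x
  le : ∀ x ∈ hatΩ Ω δ, ∀ y ∈ hatΩ Ω δ, k x y ≤ γ ‖y - x‖
  exists_weight : ∀ x ∈ Ω, ∃ m, IsCutoffWeight r m ∧ ∀ᵐ z, k x (x + z) = γ ‖z‖ * m z

theorem mul_le_div_mul_sq {s : ℝ} (ha : 0 ≤ a) (hr : 0 < r) (hrs : r ≤ s) :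
    a * s ≤ a / r * s ^ 2 := by
  have hs : 0 ≤ s := hr.le.trans hrs
  calc a * s = a / r * (r * s) := by field_simp
    _ ≤ a / r * (s * s) := by gcongr
    _ = a / r * s ^ 2 := by rw [sq]

namespace RadialKernel

theorem annulusMoment_nonneg (hγ : RadialKernel d δ γ) : 0 ≤ annulusMoment d γ r δ :=
  integral_nonneg hγ.norm_sq_mul_nonneg

theorem abs_mul_le (hγ : RadialKernel d δ γ) {z : EuclideanSpace ℝ (Fin d)} (hz : 0 ≤ γ ‖z‖)
    (hφ : ‖z‖ < δ → |φ z| ≤ a * ‖z‖ ^ 2) : |φ z * γ ‖z‖| ≤ a * (‖z‖ ^ 2 * γ ‖z‖) := by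
  rcases lt_or_ge ‖z‖ δ with hzδ | hzδ
  · rw [abs_mul, abs_of_nonneg hz, ← mul_assoc]
    exact mul_le_mul_of_nonneg_right (hφ hzδ) hz
  · simp [hγ.eq_zero hzδ]

variable [NeZero d]

theorem abs_integral_mul_le (hγ : RadialKernel d δ γ)
    (hφ : ∀ z, ‖z‖ < δ → |φ z| ≤ a * ‖z‖ ^ 2) : |∫ z, φ z * γ ‖z‖| ≤ a * d := by
  rw [← hγ.integral_norm_sq_mul, ← integral_const_mul]
  exact norm_integral_le_of_norm_le (f := fun z => φ z * γ ‖z‖)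
    (hγ.integrable_norm_sq_mul.const_mul a)
    (hγ.ae_nonneg.mono fun z hz => hγ.abs_mul_le hz (hφ z))

theorem abs_integral_cutoff_sub_integral_le (hγ : RadialKernel d δ γ) (hm : IsCutoffWeight r m)
    (hi : Integrable fun z => φ z * γ ‖z‖) (ha : 0 ≤ a)
    (hφ : ∀ z, r < ‖z‖ → ‖z‖ < δ → |φ z| ≤ a * ‖z‖ ^ 2) :
    |(∫ z, φ z * (γ ‖z‖ * m z)) - ∫ z, φ z * γ ‖z‖| ≤ a * annulusMoment d γ r δ := by
  set annulus := {z : EuclideanSpace ℝ (Fin d) | r ≤ ‖z‖ ∧ ‖z‖ ≤ δ}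
  have hannulus : MeasurableSet annulus :=
    (measurableSet_le measurable_const measurable_norm).inter
      (measurableSet_le measurable_norm measurable_const)
  have hcut : Integrable fun z => φ z * (γ ‖z‖ * m z) := by
    refine (hi.mul_bdd (c := 1) hm.measurable.aestronglyMeasurable
      (ae_of_all _ fun z => ?_)).congr (ae_of_all _ fun z => mul_assoc _ _ _)
    exact abs_le.2 ⟨by linarith [(hm.mem_Icc z).1], (hm.mem_Icc z).2⟩
  rw [← integral_sub hcut hi, annulusMoment, ← integral_const_mul, ← integral_indicator hannulus]
  refine norm_integral_le_of_norm_le (f := fun z => φ z * (γ ‖z‖ * m z) - φ z * γ ‖z‖)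
    ((hγ.integrable_norm_sq_mul.const_mul a).indicator hannulus)
    (hγ.ae_nonneg.mono fun z hz => ?_)
  have hfactor : φ z * (γ ‖z‖ * m z) - φ z * γ ‖z‖ = φ z * γ ‖z‖ * (m z - 1) := by ring
  rw [hfactor]
  rcases le_or_gt ‖z‖ r with hzr | hzr
  · rw [hm.eq_one z hzr, sub_self, mul_zero, norm_zero]
    exact indicator_nonneg (fun z _ => mul_nonneg ha (hγ.norm_sq_mul_nonneg z)) z
  rcases le_or_gt ‖z‖ δ with hzδ | hzδ
  · have hm1 : |m z - 1| ≤ 1 := abs_le.2 ⟨by linarith [(hm.mem_Icc z).1], by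
      linarith [(hm.mem_Icc z).2]⟩
    rw [indicator_of_mem (show z ∈ annulus from ⟨hzr.le, hzδ⟩), norm_mul]
    exact (mul_le_of_le_one_right (norm_nonneg _) hm1).trans (hγ.abs_mul_le hz (hφ z hzr))
  · rw [hγ.eq_zero hzδ.le, mul_zero, zero_mul, norm_zero]
    exact indicator_nonneg (fun z _ => mul_nonneg ha (hγ.norm_sq_mul_nonneg z)) z

theorem integrable_increment_mul_norm (hγ : RadialKernel d δ γ) (hδ : 0 < δ)
    (hf : HasBoundedDerivsOn 1 M f (ball x δ)) :
    Integrable fun z => (f (x + z) - f x) * γ ‖z‖ := by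
  have hmaps : MapsTo (fun z => x + z) (ball 0 δ) (ball x δ) := fun z hz => by simpa using hz
  have hcont : ContinuousOn (fun z => f (x + z) - f x) (ball 0 δ) :=
    (hf.continuousOn.comp (by fun_prop) hmaps).sub continuousOn_const
  refine hγ.integrable_mul (c := M + M) (hcont.aestronglyMeasurable measurableSet_ball)
    fun z hz => (abs_sub _ _).trans ?_
  exact add_le_add (hf.norm_apply_le (hmaps (mem_ball_zero_iff.2 hz)))
    (hf.norm_apply_le (mem_ball_self hδ))

theorem integral_sub_multilinear_mul (hγ : RadialKernel d δ γ)
    (hφ : Integrable fun z => φ z * γ ‖z‖) (b₁ : EuclideanSpace ℝ (Fin d) [×1]→L[ℝ] ℝ)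
    (b₂ : EuclideanSpace ℝ (Fin d) [×2]→L[ℝ] ℝ) (b₃ : EuclideanSpace ℝ (Fin d) [×3]→L[ℝ] ℝ) :
    ∫ z, (φ z - (b₁ (fun _ => z) + b₂ (fun _ => z) / 2 + b₃ (fun _ => z) / 6)) * γ ‖z‖ =
      (∫ z, φ z * γ ‖z‖) -
        (∑ i, b₂ ![EuclideanSpace.single i 1, EuclideanSpace.single i 1]) / 2 := by
  have h₁ := hγ.integrable_multilinear_mul b₁
  have h₂ := (hγ.integrable_multilinear_mul b₂).div_const 2
  have h₃ := (hγ.integrable_multilinear_mul b₃).div_const 6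
  have h₁₂ : Integrable fun z => b₁ (fun _ => z) * γ ‖z‖ + b₂ (fun _ => z) * γ ‖z‖ / 2 := h₁.add h₂
  have h₁₂₃ : Integrable fun z =>
      b₁ (fun _ => z) * γ ‖z‖ + b₂ (fun _ => z) * γ ‖z‖ / 2 + b₃ (fun _ => z) * γ ‖z‖ / 6 :=
    h₁₂.add h₃
  simp only [sub_mul, add_mul, div_mul_eq_mul_div]
  rw [integral_sub hφ h₁₂₃, integral_add h₁₂ h₃, integral_add h₁ h₂, integral_div,
    integral_div, integral_multilinear_mul_norm_eq_zero (by decide) b₁,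
    integral_multilinear_mul_norm_eq_zero (by decide) b₃, hγ.integral_bilinear_mul]
  ring

theorem abs_two_mul_integral_increment_sub_lap_le (hγ : RadialKernel d δ γ) (hδ : 0 < δ)
    (hf : HasBoundedDerivsOn 4 M f (ball x δ)) :
    |2 * (∫ z, (f (x + z) - f x) * γ ‖z‖) - lap d f x| ≤ d * M * δ ^ 2 / 3 := by
  have hx : x ∈ ball x δ := mem_ball_self hδ
  have hM : 0 ≤ M := (norm_nonneg _).trans (hf.norm_apply_le hx)
  let D (j : ℕ) (z : EuclideanSpace ℝ (Fin d)) : ℝ := iteratedFDeriv ℝ j f x fun _ => z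
  let rem (z : EuclideanSpace ℝ (Fin d)) : ℝ := f (x + z) - f x - (D 1 z + D 2 z / 2 + D 3 z / 6)
  have hrem : ∀ z, ‖z‖ < δ → |rem z| ≤ M * δ ^ 2 / 6 * ‖z‖ ^ 2 := by
    intro z hz
    have htaylor := hf.norm_add_sub_taylor_le (m := 3) (convex_ball x δ) hx
      (y := z) (by simpa using hz) le_rfl
    have hsum : f (x + z) - ∑ j ∈ Finset.range 4, (j.factorial : ℝ)⁻¹ • D j z = rem z := by
      simp only [D, rem, Finset.sum_range_succ, Finset.range_one, Finset.sum_singleton,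
        Nat.factorial, iteratedFDeriv_zero_apply, iteratedFDeriv_one_apply, smul_eq_mul]
      push_cast
      ring
    rw [hsum] at htaylor
    calc |rem z| ≤ M * ‖z‖ ^ 4 / 6 := htaylor
      _ = M * ‖z‖ ^ 2 / 6 * ‖z‖ ^ 2 := by ring
      _ ≤ M * δ ^ 2 / 6 * ‖z‖ ^ 2 := by gcongr
  have hinc := hγ.integrable_increment_mul_norm hδ (hf.of_le (by norm_num))
  have hintegral : ∫ z, rem z * γ ‖z‖ =
      (∫ z, (f (x + z) - f x) * γ ‖z‖) - lap d f x / 2 :=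
    hγ.integral_sub_multilinear_mul hinc _ _ _
  have habs := hγ.abs_integral_mul_le hrem
  rw [hintegral, abs_le] at habs
  exact abs_le.2 ⟨by linarith [habs.1], by linarith [habs.2]⟩

theorem abs_two_mul_integral_cutoff_increment_sub_lap_le (hγ : RadialKernel d δ γ) (hr : 0 < r)
    (hδ : 0 < δ) (hm : IsCutoffWeight r m) (hf : HasBoundedDerivsOn 4 M f (ball x δ)) :
    |2 * (∫ z, (f (x + z) - f x) * (γ ‖z‖ * m z)) - lap d f x| ≤
      d * M * δ ^ 2 / 3 + 2 * (M / r * annulusMoment d γ r δ) := by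
  have hx : x ∈ ball x δ := mem_ball_self hδ
  have hM : 0 ≤ M := (norm_nonneg _).trans (hf.norm_apply_le hx)
  have hincrement : ∀ z, r < ‖z‖ → ‖z‖ < δ → |f (x + z) - f x| ≤ M / r * ‖z‖ ^ 2 := by
    intro z hrz hzδ
    calc |f (x + z) - f x|
        ≤ M * ‖z‖ := hf.norm_add_sub_le (convex_ball x δ) hx (by simpa using hzδ) (by norm_num)
      _ ≤ M / r * ‖z‖ ^ 2 := mul_le_div_mul_sq hM hr hrz.le
  have hfull := hγ.abs_two_mul_integral_increment_sub_lap_le hδ hf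
  have hcut := hγ.abs_integral_cutoff_sub_integral_le hm
    (hγ.integrable_increment_mul_norm hδ (hf.of_le (by norm_num))) (by positivity) hincrement
  rw [abs_le] at hfull hcut
  exact abs_le.2 ⟨by linarith [hfull.1, hcut.1], by linarith [hfull.2, hcut.2]⟩

theorem le_two_mul_integral_cutoff_norm_sq_increment (hγ : RadialKernel d δ γ) (hr : 0 < r)
    (hm : IsCutoffWeight r m) (hx : ‖x‖ ≤ R) (hD : annulusMoment d γ r δ ≤ d / 4)
    (hRD : 4 * R * annulusMoment d γ r δ / r ≤ d / 2) :
    (d : ℝ) ≤ 2 * ∫ z, (‖x + z‖ ^ 2 - ‖x‖ ^ 2) * (γ ‖z‖ * m z) := by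
  have hR : 0 ≤ R := (norm_nonneg x).trans hx
  have hexpand : ∀ z, ‖x + z‖ ^ 2 - ‖x‖ ^ 2 = 2 * inner ℝ x z + ‖z‖ ^ 2 := fun z => by
    rw [norm_add_sq_real]
    ring
  have hinner : ∀ z, |2 * inner ℝ x z| ≤ 2 * R * ‖z‖ := fun z => by
    rw [abs_mul, abs_two, mul_assoc]
    exact mul_le_mul_of_nonneg_left ((abs_real_inner_le_norm x z).trans
      (mul_le_mul_of_nonneg_right hx (norm_nonneg z))) zero_le_two
  have hlin : Integrable fun z : EuclideanSpace ℝ (Fin d) => 2 * inner ℝ x z * γ ‖z‖ :=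
    hγ.integrable_mul (c := 2 * R * δ) (by fun_prop) fun z hz => (hinner z).trans (by gcongr)
  have hsum : Integrable fun z => (2 * inner ℝ x z + ‖z‖ ^ 2) * γ ‖z‖ := by
    simp only [add_mul]
    exact hlin.add hγ.integrable_norm_sq_mul
  have hfull : ∫ z, (2 * inner ℝ x z + ‖z‖ ^ 2) * γ ‖z‖ = (d : ℝ) := by
    simp only [add_mul]
    rw [integral_add hlin hγ.integrable_norm_sq_mul, hγ.integral_norm_sq_mul,
      integral_odd_mul_norm_eq_zero (fun z => by simp), zero_add]
  have hcut := hγ.abs_integral_cutoff_sub_integral_le hm hsum (a := 2 * R / r + 1) (by positivity)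
    fun z hrz _ => by
      rw [add_mul, one_mul]
      refine (abs_add_le _ _).trans (add_le_add ?_ (abs_of_nonneg (sq_nonneg _)).le)
      exact (hinner z).trans (mul_le_div_mul_sq (by positivity) hr hrz.le)
  have hsmall : (2 * R / r + 1) * annulusMoment d γ r δ =
      4 * R * annulusMoment d γ r δ / r / 2 + annulusMoment d γ r δ := by ring
  simp only [hexpand]
  linarith [(abs_le.1 hcut).1]

end RadialKernel

namespace IsTruncatedKernel

theorem exists_weight_nonlocalOp_eq (hk : IsTruncatedKernel Ω δ r γ k) (hγ : RadialKernel d δ γ)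
    (hΩ : MeasurableSet Ω) (hx : x ∈ Ω) :
    ∃ m, IsCutoffWeight r m ∧ ∀ u, nonlocalOp (volume.restrict (hatΩ Ω δ)) k u x =
      2 * ∫ z, (u (x + z) - u x) * (γ ‖z‖ * m z) := by
  obtain ⟨m, hm, hkm⟩ := hk.exists_weight x hx
  refine ⟨m, hm, fun u => ?_⟩
  rw [nonlocalOp, ← integral_indicator (measurableSet_hatΩ hΩ), ← integral_add_left_eq_self _ x]
  congr 1
  refine integral_congr_ae (hkm.mono fun z hz => ?_)
  by_cases hxz : x + z ∈ hatΩ Ω δ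
  · simp only [indicator_of_mem hxz, hz]
  · have hzδ : δ ≤ ‖z‖ := not_lt.1 fun h => hxz (ball_subset_hatΩ hx (by simpa using h))
    simp only [indicator_of_notMem hxz, hγ.eq_zero hzδ, zero_mul, mul_zero]

variable [NeZero d]

theorem isBoundedKernelOn (hk : IsTruncatedKernel Ω δ r γ k) (hγ : RadialKernel d δ γ)
    (hΩ : MeasurableSet Ω) (hκ : ∫ z in ball (0 : EuclideanSpace ℝ (Fin d)) δ, γ ‖z‖ ≤ κ) :
    IsBoundedKernelOn volume (hatΩ Ω δ) k κ := by
  have hS : MeasurableSet (hatΩ Ω δ) := measurableSet_hatΩ hΩ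
  have hγi : ∀ x : EuclideanSpace ℝ (Fin d), Integrable fun y => γ ‖y - x‖ :=
    fun x => hγ.integrable_norm.comp_sub_right x
  have hki : ∀ x ∈ hatΩ Ω δ, IntegrableOn (k x) (hatΩ Ω δ) := fun x hx =>
    (hγi x).integrableOn.mono' hk.measurable.of_uncurry_left.aestronglyMeasurable
      (ae_restrict_of_forall_mem hS fun y hy =>
        (Real.norm_of_nonneg (hk.nonneg x hx y hy)).trans_le (hk.le x hx y hy))
  refine ⟨hk.measurable, hk.nonneg, hki, fun x hx => ?_⟩
  have hγ_ae : ∀ᵐ y, 0 ≤ γ ‖y - x‖ :=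
    (measurePreserving_sub_right volume x).quasiMeasurePreserving.ae hγ.ae_nonneg
  calc ∫ y in hatΩ Ω δ, k x y
      ≤ ∫ y in hatΩ Ω δ, γ ‖y - x‖ :=
        setIntegral_mono_on (hki x hx) (hγi x).integrableOn hS (hk.le x hx)
    _ ≤ ∫ y, γ ‖y - x‖ := setIntegral_le_integral (hγi x) hγ_ae
    _ = ∫ z : EuclideanSpace ℝ (Fin d), γ ‖z‖ := integral_sub_right_eq_self (fun z => γ ‖z‖) x
    _ = ∫ z in ball (0 : EuclideanSpace ℝ (Fin d)) δ, γ ‖z‖ :=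
        (setIntegral_eq_integral_of_forall_compl_eq_zero fun z hz =>
          hγ.eq_zero (not_lt.1 fun h => hz (mem_ball_zero_iff.2 h))).symm
    _ ≤ κ := hκ

theorem abs_nonlocalOp_sub_lap_le (hk : IsTruncatedKernel Ω δ r γ k) (hγ : RadialKernel d δ γ)
    (hΩ : MeasurableSet Ω) (hr : 0 < r) (hδ : 0 < δ) (hf : HasBoundedDerivsOn 4 M f (hatΩ Ω δ))
    (hx : x ∈ Ω) :
    |nonlocalOp (volume.restrict (hatΩ Ω δ)) k f x - lap d f x| ≤
      d * M * δ ^ 2 / 3 + 2 * (M / r * annulusMoment d γ r δ) := by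
  obtain ⟨m, hm, hop⟩ := hk.exists_weight_nonlocalOp_eq hγ hΩ hx
  rw [hop]
  exact hγ.abs_two_mul_integral_cutoff_increment_sub_lap_le hr hδ hm
    (hf.mono (ball_subset_hatΩ hx))

theorem le_nonlocalOp_norm_sub_sq (hk : IsTruncatedKernel Ω δ r γ k) (hγ : RadialKernel d δ γ)
    (hΩ : MeasurableSet Ω) (hr : 0 < r) (hD : annulusMoment d γ r δ ≤ d / 4)
    (hRD : 4 * R * annulusMoment d γ r δ / r ≤ d / 2) (hx : x ∈ Ω) (hxp : ‖x - p‖ ≤ R) :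
    (d : ℝ) ≤ nonlocalOp (volume.restrict (hatΩ Ω δ)) k (fun y => ‖y - p‖ ^ 2) x := by
  obtain ⟨m, hm, hop⟩ := hk.exists_weight_nonlocalOp_eq hγ hΩ hx
  rw [hop]
  simpa only [add_sub_right_comm] using
    hγ.le_two_mul_integral_cutoff_norm_sq_increment hr hm hxp hD hRD

-- The barrier is `2T‖· - p‖²`, on which the operator is at least `2T`.
theorem abs_le_add_of_abs_nonlocalOp_le (hk : IsTruncatedKernel Ω δ r γ k)
    (hγ : RadialKernel d δ γ) (hΩ : MeasurableSet Ω)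
    (hκ : ∫ z in ball (0 : EuclideanSpace ℝ (Fin d)) δ, γ ‖z‖ ≤ κ) (hr : 0 < r)
    (hS : hatΩ Ω δ ⊆ closedBall p R) (hD : annulusMoment d γ r δ ≤ d / 4)
    (hRD : 4 * R * annulusMoment d γ r δ / r ≤ d / 2) (hT : 0 < T)
    (he : AEStronglyMeasurable e (volume.restrict (hatΩ Ω δ))) (hec : ∀ x ∈ hatΩ Ω δ, |e x| ≤ c)
    (hL : ∀ x ∈ Ω, |nonlocalOp (volume.restrict (hatΩ Ω δ)) k e x| ≤ T)
    (heb : ∀ x ∈ omegaC Ω δ, |e x| ≤ b) : ∀ x ∈ hatΩ Ω δ, |e x| ≤ b + 2 * T * R ^ 2 := by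
  have hR : ∀ x ∈ hatΩ Ω δ, ‖x - p‖ ≤ R := fun x hx => mem_closedBall_iff_norm.1 (hS hx)
  refine (hk.isBoundedKernelOn hγ hΩ hκ).abs_le_add_of_barrier (measurableSet_hatΩ hΩ) hT he hec
    (ψ := fun x => 2 * T * ‖x - p‖ ^ 2) (by fun_prop) (fun x hx => ⟨by positivity, ?_⟩)
    subset_union_left (fun x hx => ?_) fun x hx => heb x (hatΩ_diff_self ▸ hx)
  · exact mul_le_mul_of_nonneg_left (pow_le_pow_left₀ (norm_nonneg _) (hR x hx) 2) (by positivity)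
  · have hd : (1 : ℝ) ≤ d := Nat.one_le_cast.2 (NeZero.one_le)
    rw [nonlocalOp_const_mul]
    calc T + |nonlocalOp (volume.restrict (hatΩ Ω δ)) k e x|
        ≤ 2 * T * 1 := by linarith [hL x hx]
      _ ≤ 2 * T * nonlocalOp (volume.restrict (hatΩ Ω δ)) k (fun y => ‖y - p‖ ^ 2) x :=
        mul_le_mul_of_nonneg_left (hd.trans (hk.le_nonlocalOp_norm_sub_sq hγ hΩ hr hD hRD hx
          (hR x (Or.inl hx)))) (by positivity)

theorem nonlocalEnergy_le (hk : IsTruncatedKernel Ω δ r γ k) (hγ : RadialKernel d δ γ)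
    (hΩ : MeasurableSet Ω) (hκ : ∫ z in ball (0 : EuclideanSpace ℝ (Fin d)) δ, γ ‖z‖ ≤ κ)
    (hr : 0 < r) (hS : hatΩ Ω δ ⊆ closedBall p R) (hD : annulusMoment d γ r δ ≤ d / 4)
    (hRD : 4 * R * annulusMoment d γ r δ / r ≤ d / 2) (hT : 0 < T)
    (he : AEStronglyMeasurable e (volume.restrict (hatΩ Ω δ))) (hec : ∀ x ∈ hatΩ Ω δ, |e x| ≤ c)
    (hL : ∀ x ∈ Ω, |nonlocalOp (volume.restrict (hatΩ Ω δ)) k e x| ≤ T)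
    (heb : ∀ x ∈ omegaC Ω δ, |e x| ≤ b) :
    nonlocalEnergy (volume.restrict (hatΩ Ω δ)) k e ≤
      volume.real Ω * ((b + 2 * T * R ^ 2) * T) +
        volume.real (omegaC Ω δ) * (b * (4 * (b + 2 * T * R ^ 2) * κ)) := by
  have hfinite : volume (hatΩ Ω δ) ≠ ⊤ := measure_ne_top_of_subset hS measure_closedBall_lt_top.ne
  have hsup := hk.abs_le_add_of_abs_nonlocalOp_le hγ hΩ hκ hr hS hD hRD hT he hec hL heb
  rw [← hatΩ_diff_self] at heb ⊢
  exact (hk.isBoundedKernelOn hγ hΩ hκ).nonlocalEnergy_le (measurableSet_hatΩ hΩ) hfinite hk.symm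
    he hsup hΩ subset_union_left hL heb

theorem abs_nonlocalOp_sub_le (hk : IsTruncatedKernel Ω δ r γ k) (hγ : RadialKernel d δ γ)
    (hΩ : MeasurableSet Ω) (hκ : ∫ z in ball (0 : EuclideanSpace ℝ (Fin d)) δ, γ ‖z‖ ≤ κ)
    (hδ : 0 < δ) (hr : δ / 2 ≤ r) (hA : 0 ≤ A) (hM : 0 ≤ M)
    (hf : HasBoundedDerivsOn 4 M f (hatΩ Ω δ))
    (hu : AEStronglyMeasurable u (volume.restrict (hatΩ Ω δ))) (huc : ∀ x ∈ hatΩ Ω δ, |u x| ≤ c)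
    (hx : x ∈ Ω)
    (hLu : |nonlocalOp (volume.restrict (hatΩ Ω δ)) k u x - lap d f x| ≤ A * δ ^ 2) :
    |nonlocalOp (volume.restrict (hatΩ Ω δ)) k (u - f) x| ≤
      (A + (d + 4) * M) * (δ ^ 2 + δ⁻¹ * annulusMoment d γ r δ) := by
  have hS : MeasurableSet (hatΩ Ω δ) := measurableSet_hatΩ hΩ
  have hD : 0 ≤ annulusMoment d γ r δ := hγ.annulusMoment_nonneg
  have hr₀ : 0 < r := (half_pos hδ).trans_le hr
  rw [nonlocalOp_sub ((hk.isBoundedKernelOn hγ hΩ hκ).integrableOn x (Or.inl hx))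
    (memLp_top_restrict_of_abs_le hS hu huc)
    (memLp_top_restrict_of_abs_le hS (hf.continuousOn.aestronglyMeasurable hS)
      fun y hy => hf.norm_apply_le hy), ← sub_sub_sub_cancel_right _ _ (lap d f x)]
  have hMr : M / r ≤ 2 * M * δ⁻¹ := by
    calc M / r ≤ M / (δ / 2) := by gcongr
      _ = 2 * M * δ⁻¹ := by field_simp
  calc |nonlocalOp (volume.restrict (hatΩ Ω δ)) k u x - lap d f x -
        (nonlocalOp (volume.restrict (hatΩ Ω δ)) k f x - lap d f x)|
      ≤ A * δ ^ 2 + (d * M * δ ^ 2 / 3 + 2 * (M / r * annulusMoment d γ r δ)) :=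
        (abs_sub _ _).trans
          (add_le_add hLu (hk.abs_nonlocalOp_sub_lap_le hγ hΩ hr₀ hδ hf hx))
    _ ≤ A * δ ^ 2 + (d * M * δ ^ 2 + 2 * (2 * M * δ⁻¹ * annulusMoment d γ r δ)) := by
        gcongr
        exact div_le_self (by positivity) (by norm_num)
    _ = A * δ ^ 2 + d * M * δ ^ 2 + 4 * M * (δ⁻¹ * annulusMoment d γ r δ) := by ring
    _ ≤ A * δ ^ 2 + d * M * δ ^ 2 + 4 * M * (δ⁻¹ * annulusMoment d γ r δ) +
          (4 * M * δ ^ 2 + (A + d * M) * (δ⁻¹ * annulusMoment d γ r δ)) :=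
        le_add_of_nonneg_right (by positivity)
    _ = (A + (d + 4) * M) * (δ ^ 2 + δ⁻¹ * annulusMoment d γ r δ) := by ring

end IsTruncatedKernel

end Truncation

theorem energy_bound_le {δ D V a B R K K' : ℝ} {μ : ℕ} (hδ : 0 < δ) (hδ₁ : δ ≤ 1) (hμ : μ ≤ 1)
    (hD : 0 ≤ D) (hV : 0 ≤ V) (ha : 0 ≤ a) (hB : 0 ≤ B) (hK : 0 ≤ K) (hK' : 0 ≤ K') :
    V * ((B * δ ^ (2 + μ) + 2 * (a * (δ ^ 2 + δ⁻¹ * D)) * R ^ 2) * (a * (δ ^ 2 + δ⁻¹ * D))) +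
        K' * δ * (B * δ ^ (2 + μ) *
          (4 * (B * δ ^ (2 + μ) + 2 * (a * (δ ^ 2 + δ⁻¹ * D)) * R ^ 2) * (K / δ ^ 2))) ≤
      (B + 2 * a * R ^ 2) * (V * a + 4 * B * K * K') * (δ ^ (1 + μ) + δ⁻¹ * D) *
        (δ ^ 2 + δ⁻¹ * D) := by
  have hδD : 0 ≤ δ⁻¹ * D := by positivity
  set s := δ ^ 2 + δ⁻¹ * D
  set p := δ ^ (1 + μ) + δ⁻¹ * D
  have hsp : s ≤ p := add_le_add_left (pow_le_pow_of_le_one hδ.le hδ₁ (by omega)) _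
  have hδp : δ ^ (1 + μ) ≤ p := le_add_of_nonneg_right hδD
  have hδs : δ ^ (2 + μ) ≤ s :=
    (pow_le_pow_of_le_one hδ.le hδ₁ (by omega)).trans (le_add_of_nonneg_right hδD)
  set E := B * δ ^ (2 + μ) + 2 * (a * s) * R ^ 2
  have hE : E ≤ (B + 2 * a * R ^ 2) * s := by
    calc E ≤ B * s + 2 * (a * s) * R ^ 2 :=
          add_le_add_left (mul_le_mul_of_nonneg_left hδs hB) _
      _ = (B + 2 * a * R ^ 2) * s := by ring
  calc V * (E * (a * s)) + K' * δ * (B * δ ^ (2 + μ) * (4 * E * (K / δ ^ 2)))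
      = E * (V * a * s + 4 * B * K * K' * δ ^ (1 + μ)) := by
        field_simp
        ring
    _ ≤ (B + 2 * a * R ^ 2) * s * (V * a * p + 4 * B * K * K' * p) := by gcongr
    _ = (B + 2 * a * R ^ 2) * (V * a + 4 * B * K * K') * p * s := by ring

theorem stmt19_general {d : ℕ} [NeZero d] {Ω : Set (EuclideanSpace ℝ (Fin d))}
    (hΩ : MeasurableSet Ω) {δ₀ : ℝ} (hδ₀ : δ₀ ≤ 1) {μ : ℕ} (hμ : μ ≤ 1) {A B M R K K' : ℝ}
    (hA : 0 < A) (hB : 0 < B) (hM : 0 ≤ M) (hK : 0 < K) (hK' : 0 < K')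
    {xstar : EuclideanSpace ℝ (Fin d)} (hcont : hatΩ Ω δ₀ ⊆ closedBall xstar R) :
    ∃ C > 0, ∀ δ ∈ Ioc 0 δ₀, ∀ r, δ / 2 ≤ r → ∀ γ : ℝ → ℝ, RadialKernel d δ γ →
      ∫ z in ball (0 : EuclideanSpace ℝ (Fin d)) δ, γ ‖z‖ ≤ K / δ ^ 2 →
      volume (omegaC Ω δ) ≤ ENNReal.ofReal (K' * δ) →
      annulusMoment d γ r δ ≤ d / 4 → 4 * R * annulusMoment d γ r δ / r ≤ d / 2 →
      ∀ k, IsTruncatedKernel Ω δ r γ k →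
      ∀ u₀ : EuclideanSpace ℝ (Fin d) → ℝ, HasBoundedDerivsOn 4 M u₀ (hatΩ Ω δ) →
      ∀ u : EuclideanSpace ℝ (Fin d) → ℝ,
        AEStronglyMeasurable u (volume.restrict (hatΩ Ω δ)) →
        (∃ c, ∀ x ∈ hatΩ Ω δ, |u x| ≤ c) →
        (∀ x ∈ Ω, |nonlocalOp (volume.restrict (hatΩ Ω δ)) k u x - lap d u₀ x| ≤ A * δ ^ 2) →
        (∀ x ∈ omegaC Ω δ, |u x - u₀ x| ≤ B * δ ^ (2 + μ)) →
      nonlocalEnergy (volume.restrict (hatΩ Ω δ)) k (u - u₀) ≤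
        C * (δ ^ (1 + μ) + δ⁻¹ * annulusMoment d γ r δ) *
          (δ ^ 2 + δ⁻¹ * annulusMoment d γ r δ) := by
  set V := volume.real (closedBall xstar R)
  set a := A + (d + 4) * M
  refine ⟨(B + 2 * a * R ^ 2) * (V * a + 4 * B * K * K'), by positivity, ?_⟩
  rintro δ ⟨hδ, hδδ₀⟩ r hr γ hγ hκ hcollar hD hRD k hk u₀ hu₀ u hu ⟨c, hc⟩ hLu hbdry
  have hS : hatΩ Ω δ ⊆ closedBall xstar R := (hatΩ_mono hδδ₀).trans hcont
  have hD₀ : 0 ≤ annulusMoment d γ r δ := hγ.annulusMoment_nonneg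
  have hV : volume.real Ω ≤ V :=
    measureReal_mono (subset_union_left.trans hS) measure_closedBall_lt_top.ne
  have hK'δ : volume.real (omegaC Ω δ) ≤ K' * δ :=
    ENNReal.toReal_le_of_le_ofReal (by positivity) hcollar
  refine (hk.nonlocalEnergy_le hγ hΩ hκ ((half_pos hδ).trans_le hr) hS hD hRD
    (T := a * (δ ^ 2 + δ⁻¹ * annulusMoment d γ r δ)) (by positivity)
    (hu.sub (hu₀.continuousOn.aestronglyMeasurable (measurableSet_hatΩ hΩ))) (c := c + M)
    (fun x hx => (abs_sub _ _).trans (add_le_add (hc x hx) (hu₀.norm_apply_le hx)))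
    (fun x hx => hk.abs_nonlocalOp_sub_le hγ hΩ hκ hδ hr hA.le hM hu₀ hu hc hx (hLu x hx))
    hbdry).trans ?_
  refine le_trans ?_ (energy_bound_le hδ (hδδ₀.trans hδ₀) hμ hD₀ (V := V) measureReal_nonneg
    (by positivity) hB.le hK.le hK'.le)
  gcongr

/-- energy-norm error estimate for nonlocal problems with
non-symmetric polygonal interaction neighborhoods. -/
theorem stmt19 (Ω : Set (EuclideanSpace ℝ (Fin 2)))
    (hΩb : Bornology.IsBounded Ω) (hΩo : IsOpen Ω)
    (δ₀ : ℝ) (hδ₀ : δ₀ ∈ Ioc (0 : ℝ) 1) (μ : ℕ) (hμ : μ = 0 ∨ μ = 1)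
    (A B M R K K' : ℝ) (hA : 0 < A) (hB : 0 < B) (hM : 0 < M) (hR : 0 < R)
    (hK : 0 < K) (hK' : 0 < K')
    (xstar : EuclideanSpace ℝ (Fin 2)) (hcont : hatΩ Ω δ₀ ⊆ closedBall xstar R) :
    ∃ C > 0, ∀ δ ∈ Ioc (0 : ℝ) δ₀, ∀ r ∈ Icc (δ / 2) δ,
      ∀ γ : ℝ → ℝ, RadialKernel 2 δ γ →
      IntegrableOn (fun z : EuclideanSpace ℝ (Fin 2) => γ ‖z‖) (ball 0 δ) →
      (∫ z in ball (0 : EuclideanSpace ℝ (Fin 2)) δ, γ ‖z‖) ≤ K / δ ^ 2 →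
      volume (omegaC Ω δ) ≤ ENNReal.ofReal (K' * δ) →
      ∀ D : ℝ,
        D = (∫ z in {z : EuclideanSpace ℝ (Fin 2) | r ≤ ‖z‖ ∧ ‖z‖ ≤ δ},
          ‖z‖ ^ 2 * γ ‖z‖) →
        D ≤ 1 / 2 → 4 * R * D / r ≤ 1 →
      ∀ k : EuclideanSpace ℝ (Fin 2) → EuclideanSpace ℝ (Fin 2) → ℝ,
        Measurable (Function.uncurry k) →
        (∀ x ∈ hatΩ Ω δ, ∀ y ∈ hatΩ Ω δ, 0 ≤ k x y) →
        (∀ x ∈ hatΩ Ω δ, ∀ y ∈ hatΩ Ω δ, k x y = k y x) →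
        (∀ x ∈ hatΩ Ω δ, ∀ y ∈ hatΩ Ω δ, k x y ≤ γ ‖y - x‖) →
        (∀ x ∈ Ω, ∃ m : EuclideanSpace ℝ (Fin 2) → ℝ, Measurable m ∧
          (∀ z, m z ∈ Icc (0 : ℝ) 1) ∧
          (∀ z, ‖z‖ ≤ r → m z = 1) ∧ (∀ z, δ ≤ ‖z‖ → m z = 0) ∧
          (∀ᵐ z ∂volume, k x (x + z) = γ ‖z‖ * m z)) →
      ∀ u₀ : EuclideanSpace ℝ (Fin 2) → ℝ,
        (∃ V, IsOpen V ∧ closure (hatΩ Ω δ) ⊆ V ∧ ContDiffOn ℝ 4 u₀ V) →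
        (∀ y ∈ hatΩ Ω δ, ∀ j ≤ 4, ‖iteratedFDeriv ℝ j u₀ y‖ ≤ M) →
      ∀ f : EuclideanSpace ℝ (Fin 2) → ℝ,
        (∀ x ∈ Ω, |f x - (-(lap 2 u₀ x))| ≤ A * δ ^ 2) →
      ∀ g : EuclideanSpace ℝ (Fin 2) → ℝ,
        (∀ x ∈ omegaC Ω δ, |g x - u₀ x| ≤ B * δ ^ (2 + μ)) →
      ∀ u : EuclideanSpace ℝ (Fin 2) → ℝ, Measurable u →
        (∃ Mu : ℝ, ∀ x ∈ hatΩ Ω δ, |u x| ≤ Mu) →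
        (∀ x ∈ Ω, -(2 * ∫ y in hatΩ Ω δ, (u y - u x) * k x y) = f x) →
        (∀ x ∈ omegaC Ω δ, u x = g x) →
      (∫ x in hatΩ Ω δ, ∫ y in hatΩ Ω δ,
          ((u y - u₀ y) - (u x - u₀ x)) ^ 2 * k x y) ≤
        C * (δ ^ (1 + μ) + δ⁻¹ * D) * (δ ^ 2 + δ⁻¹ * D) := by
  obtain ⟨C, hC, hmain⟩ := stmt19_general hΩo.measurableSet hδ₀.2
    (show μ ≤ 1 by omega) hA hB hM.le hK hK' hcont
  refine ⟨C, hC, ?_⟩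
  rintro δ hδ r hr γ hγ - hκ hcollar D rfl hD hRD k hk_meas hk_nonneg hk_symm hk_le hk_weight u₀
    ⟨V, hVo, hV, hu₀V⟩ hu₀M f hf g hg u hu hub hueq hug
  have hk : IsTruncatedKernel Ω δ r γ k :=
    ⟨hk_meas, hk_nonneg, hk_symm, hk_le, fun x hx =>
      let ⟨m, hm, hm01, hm1, _, hkm⟩ := hk_weight x hx
      ⟨m, ⟨hm, hm01, hm1⟩, hkm⟩⟩
  have hu₀ : HasBoundedDerivsOn 4 M u₀ (hatΩ Ω δ) :=
    ⟨fun x hx => hu₀V.contDiffAt (hVo.mem_nhds (hV (subset_closure hx))), hu₀M⟩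
  refine hmain δ hδ r hr.1 γ hγ hκ hcollar (hD.trans_eq (by norm_num)) (hRD.trans_eq (by norm_num))
    k hk u₀ hu₀ u hu.aestronglyMeasurable hub (fun x hx => ?_) fun x hx => ?_
  · have hfx := hf x hx
    rwa [← hueq x hx, ← neg_sub', abs_neg] at hfx
  · rw [hug x hx]
    exact hg x hx
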